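/- Let F be a forest with at least one edge and let r ≥ 2 be an integer, and let k*(F,r) be the smallest integer k for which Builder has a winning strategy in the deterministic F-avoidance game with r colors and tree size restriction k. Then for every function N : ℕ → ℕ with n^{1−1/k*(F,r)} = o(N(n)) and N(n) ≤ n(n−1)/2 for all n, and for every sequence of online Painter strategies with r colors (one for each n), the probability that the board G_{N(n)} of the online F-avoidance game with r colors on n vertices contains a monochromatic copy of F tends to 1 as n → ∞. -/

import Mathlib

open SimpleGraph Filter Asymptotics
open scoped Classical

/-- A history of the game: the sequence of edges presented so far, together with
the colors (elements of `Fin r`, representing the colors `1,…,r`) they received. -/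
abbrev EdgeHistory (V : Type) (r : ℕ) := List (Sym2 V × Fin r)

/-- A Painter strategy on vertex type `V` with `r` colors: a function assigning a color
to every pair (history, new edge). -/
abbrev PainterStrategy (V : Type) (r : ℕ) := EdgeHistory V r → Sym2 V → Fin r

/-- Auxiliary function: run a Painter strategy on a list of presented edges,
extending the given history. -/
def runPainterAux {V : Type} {r : ℕ} (π : PainterStrategy V r) :
    EdgeHistory V r → List (Sym2 V) → EdgeHistory V r
  | h, [] => h
  | h, e :: es => runPainterAux π (h ++ [(e, π h e)]) es

/-- The colored history obtained by coloring the edges of `l` successively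
according to the Painter strategy `π`. -/
def runPainter {V : Type} {r : ℕ} (π : PainterStrategy V r) (l : List (Sym2 V)) :
    EdgeHistory V r :=
  runPainterAux π [] l

/-- `G` contains a copy of `F`, i.e. a subgraph isomorphic to `F`. -/
def IsCopy {α β : Type} (F : SimpleGraph α) (G : SimpleGraph β) : Prop :=
  ∃ f : α ↪ β, ∀ u v : α, F.Adj u v → G.Adj (f u) (f v)

/-- The graph formed by the edges of color `c` in the history `h`. -/
def colorGraph {V : Type} {r : ℕ} (h : EdgeHistory V r) (c : Fin r) : SimpleGraph V :=
  SimpleGraph.fromEdgeSet {e | (e, c) ∈ h}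

/-- The history `h` contains a monochromatic copy of `F`. -/
def HasMonoCopy {α V : Type} {r : ℕ} (F : SimpleGraph α) (h : EdgeHistory V r) : Prop :=
  ∃ c : Fin r, IsCopy F (colorGraph h c)

/-- The number of edges of `G` lying entirely within the vertex set `S`. -/
noncomputable def edgesWithin {V : Type} (G : SimpleGraph V) (S : Set V) : ℕ :=
  (G.edgeSet ∩ {e | ∀ v ∈ e, v ∈ S}).ncard

/-- `m(G) ≤ d`: every subgraph `H` of `G` with at least one vertex satisfies `e_H ≤ d · v_H`. -/
def DensityLE {V : Type} (G : SimpleGraph V) (d : ℝ) : Prop :=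
  ∀ S : Finset V, S.Nonempty → (edgesWithin G (↑S : Set V) : ℝ) ≤ d * (S.card : ℝ)

/-- `G` contains no cycle and every connected component of `G` has at most `k` edges
(equivalently, `G` is acyclic and contains no connected subgraph with more than `k` edges). -/
def TreeSizeLE {V : Type} (G : SimpleGraph V) (k : ℕ) : Prop :=
  G.IsAcyclic ∧ ∀ S : Set V, (G.induce S).Connected → edgesWithin G S ≤ k

/-- A legal sequence of moves for Builder: distinct non-loop edges. -/
def ValidEdgeSeq {V : Type} (l : List (Sym2 V)) : Prop :=
  l.Nodup ∧ ∀ e ∈ l, ¬ e.IsDiag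

/-- The (uncolored) board formed by a list of edges. -/
def boardOf {V : Type} (l : List (Sym2 V)) : SimpleGraph V :=
  SimpleGraph.fromEdgeSet {e | e ∈ l}

/-- Builder has a winning strategy in the deterministic `F`-avoidance game with `r` colors
and density restriction `d`. -/
def BuilderWinsDensity {α : Type} (F : SimpleGraph α) (r : ℕ) (d : ℝ) : Prop :=
  ∃ a : ℕ, ∀ π : PainterStrategy (Fin a) r, ∃ l : List (Sym2 (Fin a)),
    ValidEdgeSeq l ∧ (∀ i : ℕ, DensityLE (boardOf (l.take i)) d) ∧
    HasMonoCopy F (runPainter π l)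

/-- Builder has a winning strategy in the deterministic `F`-avoidance game with `r` colors
and tree size restriction `k`. -/
def BuilderWinsTree {α : Type} (F : SimpleGraph α) (r k : ℕ) : Prop :=
  ∃ a : ℕ, ∀ π : PainterStrategy (Fin a) r, ∃ l : List (Sym2 (Fin a)),
    ValidEdgeSeq l ∧ (∀ i : ℕ, TreeSizeLE (boardOf (l.take i)) k) ∧
    HasMonoCopy F (runPainter π l)

/-- The Painter strategy `π` on `a` vertices never creates a monochromatic copy of `F`
against any Builder play obeying the tree size restriction `k`. -/
def PainterAvoidsTree {α : Type} (F : SimpleGraph α) (r k a : ℕ)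
    (π : PainterStrategy (Fin a) r) : Prop :=
  ∀ l : List (Sym2 (Fin a)), ValidEdgeSeq l →
    (∀ i : ℕ, TreeSizeLE (boardOf (l.take i)) k) →
    ¬ HasMonoCopy F (runPainter π l)

/-- Painter has a winning strategy in the deterministic `F`-avoidance game with `r` colors
and tree size restriction `k`. -/
def PainterWinsTree {α : Type} (F : SimpleGraph α) (r k : ℕ) : Prop :=
  ∀ a : ℕ, ∃ π : PainterStrategy (Fin a) r, PainterAvoidsTree F r k a π

/-- A sequence of `N` distinct non-loop edges on `n` vertices. -/
def ValidSeqFun {n N : ℕ} (f : Fin N → Sym2 (Fin n)) : Prop :=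
  Function.Injective f ∧ ∀ i, ¬ (f i).IsDiag

/-- The probability (with respect to the uniformly random order in which the `N` distinct
edges of the random process on `n` vertices appear) of the event `P`. -/
noncomputable def onlineProb (n N : ℕ) (P : (Fin N → Sym2 (Fin n)) → Prop) : ℝ :=
  (Set.ncard {f : Fin N → Sym2 (Fin n) | ValidSeqFun f ∧ P f} : ℝ) /
  (Set.ncard {f : Fin N → Sym2 (Fin n) | ValidSeqFun f} : ℝ)

/-- Event: playing the online strategy `π` on the random edge sequence `f` produces
a monochromatic copy of `F`. -/
def OnlineMonoCopy {α : Type} (F : SimpleGraph α) {r n N : ℕ}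
    (π : PainterStrategy (Fin n) r) (f : Fin N → Sym2 (Fin n)) : Prop :=
  HasMonoCopy F (runPainter π (List.ofFn f))

lemma forest_count {V : Type} [Fintype V] (G H : SimpleGraph V) (k : ℕ) (hG : TreeSizeLE G k)
    (hle : H ≤ G) :
    (k + 1) * H.edgeFinset.card ≤ k * (Finset.univ.filter (fun x => x ∈ H.support)).card := by
  have hac : H.IsAcyclic := hG.1.anti hle
  let vv : Sym2 V → V := fun e => e.out.1
  have hvv : ∀ e : Sym2 V, vv e ∈ e := fun e => Sym2.out_fst_mem e
  have h1 := Finset.card_eq_sum_card_fiberwise (s := H.edgeFinset)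
    (t := (Finset.univ : Finset H.ConnectedComponent))
    (f := fun e => H.connectedComponentMk (vv e)) (by intro x _; simp)
  have h2 := Finset.card_eq_sum_card_fiberwise (s := Finset.univ.filter (fun x => x ∈ H.support))
    (t := (Finset.univ : Finset H.ConnectedComponent))
    (f := fun x => H.connectedComponentMk x) (by intro x _; simp)
  rw [h1, h2, Finset.mul_sum, Finset.mul_sum]
  refine Finset.sum_le_sum fun c _ => ?_
  set Ec := H.edgeFinset.filter (fun e => H.connectedComponentMk (vv e) = c) with hEc
  set Vc := (Finset.univ.filter (fun x => x ∈ H.support)).filter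
    (fun x => H.connectedComponentMk x = c) with hVc
  have hin : ∀ e ∈ Ec, e ∈ H.edgeSet ∧ ∀ v ∈ e, v ∈ c.supp := by
    intro e he
    rw [hEc, Finset.mem_filter, SimpleGraph.mem_edgeFinset] at he
    refine ⟨he.1, fun v hv => ?_⟩
    rw [SimpleGraph.ConnectedComponent.mem_supp_iff, ← he.2]
    by_cases h : v = vv e
    · rw [h]
    · apply SimpleGraph.ConnectedComponent.sound
      apply SimpleGraph.Adj.reachable
      rw [← SimpleGraph.mem_edgeSet]
      have : e = s(v, vv e) := (Sym2.mem_and_mem_iff h).1 ⟨hv, hvv e⟩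
      rw [← this]; exact he.1
  have hconn := c.connected_toSimpleGraph
  have htree : c.toSimpleGraph.IsTree :=
    ⟨hconn, hac.induce _⟩
  have hk : Ec.card ≤ k := by
    have h3 : edgesWithin G c.supp ≤ k := by
      apply hG.2
      refine SimpleGraph.Connected.mono ?_ hconn
      intro x y hxy
      exact hle hxy
    refine le_trans ?_ h3
    unfold edgesWithin
    rw [← Set.ncard_coe_finset]
    apply Set.ncard_le_ncard
    · intro e he
      have := hin e he
      exact ⟨SimpleGraph.edgeSet_mono hle this.1, this.2⟩
    · exact Set.toFinite _
  have hcard : Ec.card + 1 ≤ Fintype.card c.supp := by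
    have h4 := htree.card_edgeFinset
    have : Ec.card ≤ c.toSimpleGraph.edgeFinset.card := by
      have : Ec ⊆ c.toSimpleGraph.edgeFinset.image (Sym2.map Subtype.val) := by
        intro e he
        have := hin e he
        induction e using Sym2.ind with
        | _ x y =>
          rw [Finset.mem_image]
          have hx := this.2 x (by simp)
          have hy := this.2 y (by simp)
          refine ⟨s(⟨x, hx⟩, ⟨y, hy⟩), ?_, by simp⟩
          rw [SimpleGraph.mem_edgeFinset, SimpleGraph.mem_edgeSet]
          exact this.1
      exact (Finset.card_le_card this).trans Finset.card_image_le
    calc Ec.card + 1 ≤ _ := Nat.add_le_add_right this 1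
      _ = _ := by rw [h4]; exact Fintype.card_congr (Equiv.refl _)
  rcases Nat.eq_zero_or_pos Ec.card with h0 | hpos
  · rw [h0]; simp
  have hV : Fintype.card c.supp ≤ Vc.card := by
    have hnt : Nontrivial c.supp := by
      rw [← Fintype.one_lt_card_iff_nontrivial]; omega
    rw [← Set.toFinset_card]
    apply Finset.card_le_card
    intro x hx
    rw [Set.mem_toFinset] at hx
    rw [hVc]
    simp only [Finset.mem_filter, Finset.mem_univ, true_and]
    refine ⟨?_, hx⟩
    obtain ⟨y, hy⟩ := hconn.preconnected.exists_adj_of_nontrivial (⟨x, hx⟩ : c.supp)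
    exact (SimpleGraph.mem_support H).2 ⟨y, hy⟩
  nlinarith

lemma forest_count' {V : Type} [Fintype V] (G H : SimpleGraph V) (k : ℕ) (hG : TreeSizeLE G k)
    (hle : H ≤ G) (S : Finset (Sym2 V)) (T : Finset V) (hS : ∀ e ∈ S, e ∈ H.edgeSet)
    (hT : ∀ x ∈ H.support, x ∈ T) :
    (k + 1) * S.card ≤ k * T.card := by
  refine (Nat.mul_le_mul_left _ (Finset.card_le_card ?_)).trans
    ((forest_count G H k hG hle).trans (Nat.mul_le_mul_left _ (Finset.card_le_card ?_)))
  · intro e he; rw [SimpleGraph.mem_edgeFinset]; exact hS e he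
  · intro x hx; rw [Finset.mem_filter] at hx; exact hT x hx.2

lemma runAux_append {V : Type} {r : ℕ} (π : PainterStrategy V r) (h : EdgeHistory V r)
    (l₁ l₂ : List (Sym2 V)) :
    runPainterAux π h (l₁ ++ l₂) = runPainterAux π (runPainterAux π h l₁) l₂ := by
  induction l₁ generalizing h with
  | nil => rfl
  | cons e es ih => simp only [List.cons_append, runPainterAux]; exact ih _

lemma runAux_map_fst {V : Type} {r : ℕ} (π : PainterStrategy V r) (h : EdgeHistory V r)
    (l : List (Sym2 V)) :
    (runPainterAux π h l).map Prod.fst = h.map Prod.fst ++ l := by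
  induction l generalizing h with
  | nil => simp [runPainterAux]
  | cons e es ih => simp only [runPainterAux]; rw [ih]; simp

lemma runAux_subset {V : Type} {r : ℕ} (π : PainterStrategy V r) (h : EdgeHistory V r)
    (l : List (Sym2 V)) : h ⊆ runPainterAux π h l := by
  induction l generalizing h with
  | nil => simp [runPainterAux]
  | cons e es ih =>
    simp only [runPainterAux]
    exact fun x hx => ih _ (List.mem_append_left _ hx)

lemma mem_runAux {V : Type} {r : ℕ} (π : PainterStrategy V r) (h : EdgeHistory V r)
    (l : List (Sym2 V)) (p : Sym2 V × Fin r) :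
    p ∈ runPainterAux π h l ↔ p ∈ h ∨ ∃ (i : ℕ) (hi : i < l.length),
      p = (l[i], π (runPainterAux π h (l.take i)) l[i]) := by
  induction l using List.reverseRecOn with
  | nil => simp [runPainterAux]
  | append_singleton l e ih =>
    rw [runAux_append]
    simp only [runPainterAux, List.mem_append, ih, List.mem_singleton]
    constructor
    · rintro ((h1 | ⟨i, hi, h1⟩) | h1)
      · exact Or.inl h1
      · refine Or.inr ⟨i, by simp; omega, ?_⟩
        rw [List.getElem_append_left hi, List.take_append_of_le_length hi.le]; exact h1
      · refine Or.inr ⟨l.length, by simp, ?_⟩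
        rw [List.getElem_append_right le_rfl, List.take_append_of_le_length le_rfl]
        simpa using h1
    · rintro (h1 | ⟨i, hi, h1⟩)
      · exact Or.inl (Or.inl h1)
      · rcases Nat.lt_or_ge i l.length with h2 | h2
        · refine Or.inl (Or.inr ⟨i, h2, ?_⟩)
          rw [List.getElem_append_left h2, List.take_append_of_le_length h2.le] at h1
          exact h1
        · have : i = l.length := by simp at hi; omega
          subst this
          right
          rw [List.getElem_append_right le_rfl, List.take_append_of_le_length le_rfl] at h1
          simpa using h1

lemma HasMonoCopy.mono {α V : Type} {r : ℕ} {F : SimpleGraph α} {h h' : EdgeHistory V r}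
    (hc : HasMonoCopy F h) (hs : h ⊆ h') : HasMonoCopy F h' := by
  obtain ⟨c, f, hf⟩ := hc
  refine ⟨c, f, fun u v huv => ?_⟩
  have := hf u v huv
  simp only [colorGraph, SimpleGraph.fromEdgeSet_adj, Set.mem_ofPred_eq] at this ⊢
  exact ⟨hs this.1, this.2⟩

lemma HasMonoCopy.transfer {α V W : Type} {r : ℕ} {F : SimpleGraph α} {h : EdgeHistory V r}
    {h' : EdgeHistory W r} (φ : V ↪ W)
    (hc : HasMonoCopy F h) (hs : ∀ e c, (e, c) ∈ h → (e.map φ, c) ∈ h') : HasMonoCopy F h' := by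
  obtain ⟨c, f, hf⟩ := hc
  refine ⟨c, f.trans φ, fun u v huv => ?_⟩
  have := hf u v huv
  simp only [colorGraph, SimpleGraph.fromEdgeSet_adj, Set.mem_ofPred_eq] at this ⊢
  exact ⟨by simpa using hs _ _ this.1, by simpa using this.2⟩

/-- replace the entries of `f` at the positions given by `t` in the first `j` blocks by `φ ∘ lf` -/
def plant {a b m n : ℕ} (j : ℕ) (lf : Fin b → Sym2 (Fin a)) (φ : Fin a ↪ Fin n)
    (t : Fin b → Fin m) (f : Fin (b * m) → Sym2 (Fin n)) : Fin (b * m) → Sym2 (Fin n) :=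
  fun x => if (x.divNat : ℕ) < j ∧ x.modNat = t x.divNat then (lf x.divNat).map φ else f x

lemma exists_win {α : Type} (F : SimpleGraph α) (r k a b m n : ℕ)
    (hwin : ∀ π : PainterStrategy (Fin a) r, ∃ l : List (Sym2 (Fin a)),
      ValidEdgeSeq l ∧ (∀ i : ℕ, TreeSizeLE (boardOf (l.take i)) k) ∧
      HasMonoCopy F (runPainter π l))
    (hb : ∀ l : List (Sym2 (Fin a)), ValidEdgeSeq l → l.length ≤ b) (e0 : Sym2 (Fin a))
    (π : PainterStrategy (Fin n) r) (h0 : EdgeHistory (Fin n) r)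
    (φ : Fin a ↪ Fin n) (t : Fin b → Fin m) (f : Fin (b * m) → Sym2 (Fin n)) :
    ∃ l : List (Sym2 (Fin a)),
      ValidEdgeSeq l ∧ (∀ i : ℕ, TreeSizeLE (boardOf (l.take i)) k) ∧
      HasMonoCopy F (runPainterAux π h0
        (List.ofFn (plant l.length (fun i : Fin b => l.getD i e0) φ t f))) := by
  let sq : List (Sym2 (Fin a)) → List (Sym2 (Fin n)) := fun l =>
    List.ofFn (plant l.length (fun i : Fin b => l.getD i e0) φ t f)
  let ps : ℕ → ℕ := fun i => if h : i < b then (finProdFinEquiv ((⟨i, h⟩ : Fin b), t ⟨i, h⟩) : ℕ)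
    else 0
  let π' : PainterStrategy (Fin a) r := fun h e =>
    π (runPainterAux π h0 ((sq (h.map Prod.fst ++ [e])).take (ps h.length))) (e.map φ)
  obtain ⟨l, hl, hl2, hl3⟩ := hwin π'
  refine ⟨l, hl, hl2, hl3.transfer φ ?_⟩
  intro e c hec
  unfold runPainter at hec
  rw [mem_runAux] at hec
  rcases hec with hec | ⟨i, hi, hec⟩
  · simp at hec
  have hib : i < b := lt_of_lt_of_le hi (hb l hl)
  obtain ⟨he, hc⟩ := Prod.mk.injEq .. ▸ hec
  have hfst : (runPainterAux π' [] (l.take i)).map Prod.fst = l.take i := by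
    rw [runAux_map_fst]; simp
  have hlen : (runPainterAux π' [] (l.take i)).length = i := by
    rw [← List.length_map (f := Prod.fst), hfst, List.length_take]; omega
  have hc2 : c = π (runPainterAux π h0 ((sq (l.take (i + 1))).take (ps i))) (l[i].map φ) := by
    rw [hc]
    change π (runPainterAux π h0 ((sq (List.map Prod.fst _ ++ [_])).take (ps (List.length _)))) _ = _
    rw [hfst, hlen, List.take_append_getElem]
  have hps : ps i = (finProdFinEquiv ((⟨i, hib⟩ : Fin b), t ⟨i, hib⟩) : ℕ) := dif_pos hib
  have hpslt : ps i < b * m := by rw [hps]; exact Fin.is_lt _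
  rw [mem_runAux]
  right
  refine ⟨ps i, by simpa using hpslt, ?_⟩
  have hget : (List.ofFn (plant l.length (fun i : Fin b => l.getD i e0) φ t f))[ps i]'(by
      simpa using hpslt) = l[i].map φ := by
    rw [List.getElem_ofFn]
    have : (⟨ps i, hpslt⟩ : Fin (b * m)) = finProdFinEquiv ((⟨i, hib⟩ : Fin b), t ⟨i, hib⟩) :=
      Fin.ext hps
    have h2 := finProdFinEquiv.symm_apply_apply ((⟨i, hib⟩ : Fin b), t ⟨i, hib⟩)
    rw [← this] at h2
    have h3 : (⟨ps i, hpslt⟩ : Fin (b * m)).divNat = ⟨i, hib⟩ := congrArg Prod.fst h2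
    have h4 : (⟨ps i, hpslt⟩ : Fin (b * m)).modNat = t ⟨i, hib⟩ := congrArg Prod.snd h2
    unfold plant
    rw [if_pos]
    · rw [h3]; simp [hi]
    · rw [h3, h4]; exact ⟨hi, rfl⟩
  rw [hget]
  have htake : (List.ofFn (plant l.length (fun i : Fin b => l.getD i e0) φ t f)).take (ps i)
      = (sq (l.take (i + 1))).take (ps i) := by
    apply List.ext_getElem
    · simp [sq]
    · intro x hx hx'
      simp only [List.length_take, List.length_ofFn, lt_min_iff] at hx
      simp only [sq, List.getElem_take, List.getElem_ofFn]
      have hd : ((⟨x, hx.2⟩ : Fin (b * m)).divNat : ℕ) ≤ i := by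
        rw [Fin.coe_divNat]
        have hm : 0 < m := (t ⟨i, hib⟩).pos
        have h5 := hx.1
        rw [hps] at h5
        simp only [finProdFinEquiv_apply_val] at h5
        have h6 := (t ⟨i, hib⟩).is_lt
        rw [← Nat.lt_succ_iff, Nat.div_lt_iff_lt_mul hm]
        simp only
        nlinarith
      unfold plant
      have hmin : min (i + 1) l.length = i + 1 := by omega
      have hg : (l.take (i + 1))[((⟨x, hx.2⟩ : Fin (b * m)).divNat : ℕ)]?
          = l[((⟨x, hx.2⟩ : Fin (b * m)).divNat : ℕ)]? := by
        rw [List.getElem?_take_of_lt (by omega)]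
      have c1 : ((⟨x, hx.2⟩ : Fin (b * m)).divNat : ℕ) < l.length := by omega
      have c2 : ((⟨x, hx.2⟩ : Fin (b * m)).divNat : ℕ) < (l.take (i+1)).length := by
        rw [List.length_take]; omega
      simp only [c1, c2, true_and, List.getD_eq_getElem?_getD, hg]
  rw [htake, he, hc2]

/-- positions -/
def posSet {b m : ℕ} (j : ℕ) (t : Fin b → Fin m) : Finset (Fin (b * m)) :=
  Finset.univ.filter (fun x => (x.divNat : ℕ) < j ∧ x.modNat = t x.divNat)

lemma div_mod_pos {b m : ℕ} (i : Fin b) (y : Fin m) :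
    (finProdFinEquiv (i, y)).divNat = i ∧ (finProdFinEquiv (i, y)).modNat = y := by
  have h2 := finProdFinEquiv.symm_apply_apply (i, y)
  exact ⟨congrArg Prod.fst h2, congrArg Prod.snd h2⟩

lemma pos_div_mod {b m : ℕ} (x : Fin (b * m)) : finProdFinEquiv (x.divNat, x.modNat) = x :=
  finProdFinEquiv.apply_symm_apply x

lemma card_filter_pos {b m : ℕ} (t : Fin b → Fin m) (Q : Fin b → Prop)
    [DecidablePred Q]
    [DecidablePred (fun x : Fin (b * m) => Q x.divNat ∧ x.modNat = t x.divNat)] :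
    (Finset.univ.filter (fun x : Fin (b * m) => Q x.divNat ∧ x.modNat = t x.divNat)).card
      = (Finset.univ.filter Q).card := by
  symm
  apply Finset.card_bij (fun i _ => finProdFinEquiv (i, t i))
  · intro i hi
    have := div_mod_pos i (t i)
    simp only [Finset.mem_filter, Finset.mem_univ, true_and] at hi ⊢
    rw [this.1, this.2]; exact ⟨hi, rfl⟩
  · intro i _ i' _ h
    have := finProdFinEquiv.injective h
    exact congrArg Prod.fst this
  · intro x hx
    simp only [Finset.mem_filter, Finset.mem_univ, true_and] at hx
    refine ⟨x.divNat, by simpa using hx.1, ?_⟩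
    rw [← hx.2]; exact pos_div_mod x

lemma card_lt_fin {b j : ℕ} (hj : j ≤ b) :
    (Finset.univ.filter (fun i : Fin b => (i : ℕ) < j)).card = j := by
  rw [Fin.card_filter_val_lt]; exact min_eq_right hj

lemma card_posSet {b m j : ℕ} (hj : j ≤ b) (t : Fin b → Fin m) : (posSet j t).card = j := by
  unfold posSet
  rw [card_filter_pos t (fun i : Fin b => (i : ℕ) < j), card_lt_fin hj]

lemma count_fix {K S : Type} [Fintype K] [Fintype S] (P : Finset K) (g0 : K → S) :
    (Finset.univ.filter (fun g : K → S => ∀ x ∈ P, g x = g0 x)).card * Fintype.card S ^ P.card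
      = Fintype.card S ^ Fintype.card K := by
  have h : Finset.univ.filter (fun g : K → S => ∀ x ∈ P, g x = g0 x)
      = Fintype.piFinset (fun x => if x ∈ P then {g0 x} else Finset.univ) := by
    ext g
    simp only [Finset.mem_filter, Finset.mem_univ, true_and, Fintype.mem_piFinset]
    refine forall_congr' fun x => ?_
    by_cases hx : x ∈ P <;> simp [hx]
  rw [h, Fintype.card_piFinset]
  have h2 : ∀ x : K, (if x ∈ P then ({g0 x} : Finset S) else Finset.univ).card
      = if x ∈ P then 1 else Fintype.card S := by
    intro x; split_ifs <;> simp
  simp_rw [h2]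
  rw [Finset.prod_ite]
  simp only [Finset.prod_const, one_pow, one_mul]
  rw [← pow_add]
  congr 1
  have := Finset.card_filter_add_card_filter_not (s := (Finset.univ : Finset K)) (fun x => x ∈ P)
  simp only [Finset.filter_univ_mem, Finset.card_univ] at this
  omega

/-- consistency -/
def Cons {a b m n : ℕ} (j : ℕ) (lf : Fin b → Sym2 (Fin a))
    (p : (Fin a ↪ Fin n) × (Fin b → Fin m)) (g : Fin (b * m) → Sym2 (Fin n)) : Prop :=
  ∀ x ∈ posSet j p.2, g x = (lf x.divNat).map p.1

lemma plant_count {a b m n : ℕ} (j : ℕ) (hj : j ≤ b) (lf : Fin b → Sym2 (Fin a))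
    (p : (Fin a ↪ Fin n) × (Fin b → Fin m)) (W : Finset (Fin (b * m) → Sym2 (Fin n))) :
    (Finset.univ.filter (fun f => plant j lf p.1 p.2 f ∈ W)).card ≤
      (W.filter (fun g => Cons j lf p g)).card * Fintype.card (Sym2 (Fin n)) ^ j := by
  have h1 : Fintype.card (Sym2 (Fin n)) ^ j
      = (Finset.univ : Finset (posSet j p.2 → Sym2 (Fin n))).card := by
    rw [Finset.card_univ, Fintype.card_fun, Fintype.card_coe, card_posSet hj]
  rw [h1, ← Finset.card_product]
  apply Finset.card_le_card_of_injOn (fun f => (plant j lf p.1 p.2 f, fun x => f x.1))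
  · intro f hf
    simp only [Finset.coe_filter, Finset.mem_univ, true_and, Set.mem_ofPred_eq] at hf
    simp only [Finset.coe_product, Finset.coe_filter, Set.mem_prod, Set.mem_ofPred_eq]
    refine ⟨⟨hf, ?_⟩, by simp⟩
    intro x hx
    unfold posSet at hx
    rw [Finset.mem_filter] at hx
    exact if_pos hx.2
  · intro f _ f' _ h
    rw [Prod.mk.injEq] at h
    funext x
    by_cases hx : x ∈ posSet j p.2
    · exact congrFun h.2 ⟨x, hx⟩
    · have := congrFun h.1 x
      unfold posSet at hx
      simp only [Finset.mem_filter, Finset.mem_univ, true_and] at hx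
      unfold plant at this
      rwa [if_neg hx, if_neg hx] at this

lemma pair_count {a b m n : ℕ} (j : ℕ) (hj : j ≤ b) (lf : Fin b → Sym2 (Fin a))
    (p p' : (Fin a ↪ Fin n) × (Fin b → Fin m)) (I : Finset (Fin b))
    (hI : I = Finset.univ.filter (fun i : Fin b => (i : ℕ) < j ∧ p.2 i = p'.2 i)) :
    (Finset.univ.filter (fun g => Cons j lf p g ∧ Cons j lf p' g)).card
      * Fintype.card (Sym2 (Fin n)) ^ (2 * j) ≤
    if (∀ i ∈ I, (lf i).map p.1 = (lf i).map p'.1) then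
      Fintype.card (Sym2 (Fin n)) ^ (b * m) * Fintype.card (Sym2 (Fin n)) ^ I.card else 0 := by
  by_cases hne : (Finset.univ.filter (fun g => Cons j lf p g ∧ Cons j lf p' g)).Nonempty
  swap
  · rw [Finset.not_nonempty_iff_eq_empty] at hne
    rw [hne]; simp
  obtain ⟨g0, hg0⟩ := hne
  simp only [Finset.mem_filter, Finset.mem_univ, true_and] at hg0
  rw [if_pos]
  swap
  · intro i hi
    rw [hI] at hi
    simp only [Finset.mem_filter, Finset.mem_univ, true_and] at hi
    have h1 := hg0.1 (finProdFinEquiv (i, p.2 i)) (by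
      simp only [posSet, Finset.mem_filter, Finset.mem_univ, true_and]
      rw [(div_mod_pos _ _).1, (div_mod_pos _ _).2]; exact ⟨hi.1, rfl⟩)
    have h2 := hg0.2 (finProdFinEquiv (i, p.2 i)) (by
      simp only [posSet, Finset.mem_filter, Finset.mem_univ, true_and]
      rw [(div_mod_pos _ _).1, (div_mod_pos _ _).2]; exact hi)
    rw [(div_mod_pos _ _).1] at h1 h2
    rw [← h1, ← h2]
  have h3 := count_fix (posSet j p.2 ∪ posSet j p'.2) g0
  have h4 : (posSet j p.2 ∪ posSet j p'.2).card + I.card = 2 * j := by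
    have h5 := Finset.card_union_add_card_inter (posSet j p.2) (posSet j p'.2)
    rw [card_posSet hj, card_posSet hj] at h5
    have h6 : (posSet j p.2 ∩ posSet j p'.2).card = I.card := by
      rw [hI, ← card_filter_pos p.2 (fun i : Fin b => (i : ℕ) < j ∧ p.2 i = p'.2 i)]
      congr 1
      ext x
      simp only [posSet, Finset.mem_inter, Finset.mem_filter, Finset.mem_univ, true_and]
      constructor
      · rintro ⟨⟨h, h'⟩, _, h''⟩
        exact ⟨⟨h, h'.symm.trans h''⟩, h'⟩
      · rintro ⟨⟨h, h'⟩, h''⟩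
        exact ⟨⟨h, h''⟩, h, h''.trans h'⟩
    omega
  rw [Fintype.card_fin] at h3
  rw [← h3, ← h4, pow_add, ← mul_assoc]
  apply Nat.mul_le_mul_right
  apply Nat.mul_le_mul_right
  apply Finset.card_le_card
  intro g hg
  simp only [Finset.mem_filter, Finset.mem_univ, true_and] at hg ⊢
  intro x hx
  rw [Finset.mem_union] at hx
  rcases hx with hx | hx
  · rw [hg.1 x hx, hg0.1 x hx]
  · rw [hg.2 x hx, hg0.2 x hx]

lemma phi_count {a b n : ℕ} (lf : Fin b → Sym2 (Fin a)) (I : Finset (Fin b))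
    (φ : Fin a ↪ Fin n) :
    (Finset.univ.filter (fun ψ : Fin a ↪ Fin n =>
        ∀ i ∈ I, (lf i).map φ = (lf i).map ψ)).card
      * n ^ (Finset.univ.filter (fun x => ∃ i ∈ I, x ∈ lf i)).card ≤ 2 ^ a * n ^ a := by
  set T := Finset.univ.filter (fun x => ∃ i ∈ I, x ∈ lf i) with hT
  have hch : ∀ x : Fin a, ∃ s : Finset (Fin n), (x ∈ T → s.card ≤ 2) ∧
      ∀ ψ : Fin a ↪ Fin n, (∀ i ∈ I, (lf i).map φ = (lf i).map ψ) → ψ x ∈ s := by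
    intro x
    by_cases hx : x ∈ T
    · rw [hT, Finset.mem_filter] at hx
      obtain ⟨i, hi, hxi⟩ := hx.2
      refine ⟨((lf i).map φ).toFinset, fun _ => ?_, fun ψ hψ => ?_⟩
      · have := Sym2.card_toFinset ((lf i).map φ)
        rw [this]; split_ifs <;> omega
      · rw [Sym2.mem_toFinset, hψ i hi]
        exact Sym2.mem_map.2 ⟨x, hxi, rfl⟩
    · exact ⟨Finset.univ, fun h => absurd h hx, by simp⟩
  choose s hs1 hs2 using hch
  have h1 : (Finset.univ.filter (fun ψ : Fin a ↪ Fin n =>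
        ∀ i ∈ I, (lf i).map φ = (lf i).map ψ)).card ≤ (Fintype.piFinset s).card := by
    apply Finset.card_le_card_of_injOn (fun ψ : Fin a ↪ Fin n => (ψ : Fin a → Fin n))
    · intro ψ hψ
      simp only [Finset.coe_filter, Finset.mem_univ, true_and, Set.mem_ofPred_eq] at hψ
      simp only [Finset.mem_coe, Fintype.mem_piFinset]
      exact fun x => hs2 x ψ hψ
    · intro ψ _ ψ' _ h
      exact DFunLike.coe_injective h
  have h2 : (Fintype.piFinset s).card ≤ ∏ x : Fin a, (if x ∈ T then 2 else n) := by
    rw [Fintype.card_piFinset]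
    apply Finset.prod_le_prod' 
    intro x _
    split_ifs with h
    · exact hs1 x h
    · exact (Finset.card_le_univ _).trans (by simp)
  rw [Finset.prod_ite] at h2
  simp only [Finset.prod_const, Finset.filter_univ_mem] at h2
  have h3 := Finset.card_filter_add_card_filter_not (s := (Finset.univ : Finset (Fin a)))
    (fun x => x ∈ T)
  simp only [Finset.filter_univ_mem, Finset.card_univ, Fintype.card_fin] at h3
  calc _ ≤ (2 ^ T.card * n ^ (Finset.univ.filter (fun x => x ∉ T)).card) * n ^ T.card :=
        Nat.mul_le_mul_right _ (h1.trans h2)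
    _ = 2 ^ T.card * n ^ a := by
        rw [mul_assoc, ← pow_add, add_comm, h3]
        
    _ ≤ _ := Nat.mul_le_mul_right _ (Nat.pow_le_pow_right (by norm_num) (by omega))

lemma t_count {b m : ℕ} (I : Finset (Fin b)) (t : Fin b → Fin m) :
    (Finset.univ.filter (fun s : Fin b → Fin m => ∀ i ∈ I, t i = s i)).card * m ^ I.card
      = m ^ b := by
  have := count_fix I t
  simp only [Fintype.card_fin] at this
  rw [← this]
  congr 2
  ext s
  simp [eq_comm]

lemma card_sym2_le (n : ℕ) : Fintype.card (Sym2 (Fin n)) ≤ n ^ 2 := by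
  rw [Sym2.card, Fintype.card_fin, Nat.choose_two_right]
  have : (n + 1) * (n + 1 - 1) ≤ 2 * n ^ 2 := by
    simp only [Nat.add_sub_cancel]
    nlinarith [Nat.le_self_pow (n := 2) (by norm_num) n]
  omega

lemma arith_core (n m k q v : ℕ) (hn : 1 ≤ n) (hk : 1 ≤ k) (hm : n ^ (k - 1) ≤ m ^ k)
    (h : (k + 1) * q ≤ k * v) : Fintype.card (Sym2 (Fin n)) ^ q ≤ m ^ q * n ^ v := by
  refine (Nat.pow_le_pow_left (card_sym2_le n) q).trans ?_
  rw [← Nat.pow_le_pow_iff_left (n := k) (by omega)]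
  obtain ⟨k, rfl⟩ : ∃ k', k = k' + 1 := ⟨k - 1, by omega⟩
  simp only [Nat.add_sub_cancel] at hm
  calc ((n ^ 2) ^ q) ^ (k + 1) = n ^ (2 * q * (k + 1)) := by rw [← pow_mul, ← pow_mul, mul_assoc]
    _ ≤ n ^ (k * q + (k + 1) * v) := Nat.pow_le_pow_right hn (by nlinarith)
    _ = (n ^ k) ^ q * n ^ ((k + 1) * v) := by rw [pow_add, ← pow_mul]
    _ ≤ (m ^ (k + 1)) ^ q * n ^ ((k + 1) * v) :=
        Nat.mul_le_mul_right _ (Nat.pow_le_pow_left hm q)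
    _ = (m ^ q * n ^ v) ^ (k + 1) := by
        rw [mul_pow, ← pow_mul, ← pow_mul, ← pow_mul, mul_comm (k + 1) q, mul_comm (k + 1) v]

lemma emb_count (a n : ℕ) (h : 2 * a ≤ n) :
    n ^ a ≤ 2 ^ a * Fintype.card (Fin a ↪ Fin n) := by
  rw [Fintype.card_embedding_eq, Fintype.card_fin, Fintype.card_fin]
  calc n ^ a ≤ (2 * (n + 1 - a)) ^ a := Nat.pow_le_pow_left (by omega) a
    _ = 2 ^ a * (n + 1 - a) ^ a := mul_pow ..
    _ ≤ _ := Nat.mul_le_mul_left _ (Nat.pow_sub_le_descFactorial n a)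

lemma overlap_count {a b m n k : ℕ} (lf : Fin b → Sym2 (Fin a)) (I : Finset (Fin b))
    (hn : 1 ≤ n) (hna : 2 * a ≤ n) (hk : 1 ≤ k) (hm : n ^ (k - 1) ≤ m ^ k)
    (hI : (k + 1) * I.card ≤ k * (Finset.univ.filter (fun x => ∃ i ∈ I, x ∈ lf i)).card) :
    (∑ p : (Fin a ↪ Fin n) × (Fin b → Fin m), ∑ p' : (Fin a ↪ Fin n) × (Fin b → Fin m),
      if (∀ i ∈ I, (lf i).map p.1 = (lf i).map p'.1) ∧ (∀ i ∈ I, p.2 i = p'.2 i) then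
        Fintype.card (Sym2 (Fin n)) ^ I.card else 0)
    ≤ 4 ^ a * (Fintype.card ((Fin a ↪ Fin n) × (Fin b → Fin m))) ^ 2 := by
  have key : ∀ p : (Fin a ↪ Fin n) × (Fin b → Fin m),
      (∑ p' : (Fin a ↪ Fin n) × (Fin b → Fin m),
      if (∀ i ∈ I, (lf i).map p.1 = (lf i).map p'.1) ∧ (∀ i ∈ I, p.2 i = p'.2 i) then
        Fintype.card (Sym2 (Fin n)) ^ I.card else 0)
      ≤ 4 ^ a * Fintype.card ((Fin a ↪ Fin n) × (Fin b → Fin m)) := by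
    intro p
    rw [← Finset.sum_filter, Finset.sum_const, smul_eq_mul, ← Finset.univ_product_univ,
      Finset.filter_product (s := Finset.univ) (t := Finset.univ)
        (fun ψ : Fin a ↪ Fin n => ∀ i ∈ I, (lf i).map p.1 = (lf i).map ψ)
        (fun s : Fin b → Fin m => ∀ i ∈ I, p.2 i = s i), Finset.card_product]
    have h1 := phi_count lf I p.1
    have h2 := t_count I p.2
    have h3 := arith_core n m k _ _ hn hk hm hI
    have h4 := emb_count a n hna
    set A := (Finset.univ.filter (fun ψ : Fin a ↪ Fin n =>
      ∀ i ∈ I, (lf i).map p.1 = (lf i).map ψ)).card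
    set B := (Finset.univ.filter (fun s : Fin b → Fin m => ∀ i ∈ I, p.2 i = s i)).card
    set v := (Finset.univ.filter (fun x => ∃ i ∈ I, x ∈ lf i)).card
    calc A * B * Fintype.card (Sym2 (Fin n)) ^ I.card ≤ A * B * (m ^ I.card * n ^ v) :=
          Nat.mul_le_mul_left _ h3
      _ = (A * n ^ v) * (B * m ^ I.card) := by ring
      _ ≤ (2 ^ a * n ^ a) * m ^ b := by rw [h2]; exact Nat.mul_le_mul_right _ h1
      _ ≤ (2 ^ a * (2 ^ a * Fintype.card (Fin a ↪ Fin n))) * m ^ b :=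
          Nat.mul_le_mul_right _ (Nat.mul_le_mul_left _ h4)
      _ = _ := by
          rw [Fintype.card_prod, Fintype.card_fun, Fintype.card_fin, Fintype.card_fin,
            show (4 : ℕ) = 2 * 2 by norm_num, mul_pow]
          ring
  calc _ ≤ ∑ p : (Fin a ↪ Fin n) × (Fin b → Fin m),
        4 ^ a * Fintype.card ((Fin a ↪ Fin n) × (Fin b → Fin m)) :=
        Finset.sum_le_sum fun p _ => key p
    _ = _ := by rw [Finset.sum_const, Finset.card_univ, smul_eq_mul]; ring

lemma second_moment {a b m n k : ℕ} (j : ℕ) (hj : j ≤ b) (lf : Fin b → Sym2 (Fin a))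
    (hn : 1 ≤ n) (hna : 2 * a ≤ n) (hk : 1 ≤ k) (hm : n ^ (k - 1) ≤ m ^ k)
    (hlf : ∀ I : Finset (Fin b), (∀ i ∈ I, (i : ℕ) < j) →
      (k + 1) * I.card ≤ k * (Finset.univ.filter (fun x => ∃ i ∈ I, x ∈ lf i)).card) :
    (∑ g : Fin (b * m) → Sym2 (Fin n), (Finset.univ.filter
      (fun p : (Fin a ↪ Fin n) × (Fin b → Fin m) => Cons j lf p g)).card ^ 2)
      * Fintype.card (Sym2 (Fin n)) ^ (2 * j)
    ≤ 2 ^ b * 4 ^ a * (Fintype.card ((Fin a ↪ Fin n) × (Fin b → Fin m))) ^ 2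
      * Fintype.card (Sym2 (Fin n)) ^ (b * m) := by
  set D := Fintype.card (Sym2 (Fin n)) with hD
  have h1 : (∑ g : Fin (b * m) → Sym2 (Fin n), (Finset.univ.filter
      (fun p : (Fin a ↪ Fin n) × (Fin b → Fin m) => Cons j lf p g)).card ^ 2)
      = ∑ p : (Fin a ↪ Fin n) × (Fin b → Fin m), ∑ p' : (Fin a ↪ Fin n) × (Fin b → Fin m),
        (Finset.univ.filter (fun g => Cons j lf p g ∧ Cons j lf p' g)).card := by
    simp_rw [Finset.card_filter, sq, Finset.sum_mul_sum]
    rw [Finset.sum_comm]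
    refine Finset.sum_congr rfl fun p _ => ?_
    rw [Finset.sum_comm]
    refine Finset.sum_congr rfl fun p' _ => Finset.sum_congr rfl fun g _ => ?_
    by_cases h : Cons j lf p g <;> by_cases h' : Cons j lf p' g <;> simp [h, h']
  rw [h1, Finset.sum_mul]
  simp_rw [Finset.sum_mul]
  set U := (Finset.univ.filter (fun i : Fin b => (i : ℕ) < j)).powerset with hU
  calc _ ≤ ∑ p : (Fin a ↪ Fin n) × (Fin b → Fin m), ∑ p' : (Fin a ↪ Fin n) × (Fin b → Fin m),
        ∑ I ∈ U, D ^ (b * m) * (if (∀ i ∈ I, (lf i).map p.1 = (lf i).map p'.1) ∧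
          (∀ i ∈ I, p.2 i = p'.2 i) then D ^ I.card else 0) := by
        refine Finset.sum_le_sum fun p _ => Finset.sum_le_sum fun p' _ => ?_
        set I0 := Finset.univ.filter (fun i : Fin b => (i : ℕ) < j ∧ p.2 i = p'.2 i) with hI0
        refine (pair_count j hj lf p p' I0 rfl).trans ?_
        have hmem : I0 ∈ U := by
          rw [hU, Finset.mem_powerset]
          intro i hi
          rw [hI0, Finset.mem_filter] at hi
          simp [hi.2.1]
        refine le_trans ?_ (Finset.single_le_sum (f := fun I => D ^ (b * m) *
          (if (∀ i ∈ I, (lf i).map p.1 = (lf i).map p'.1) ∧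
          (∀ i ∈ I, p.2 i = p'.2 i) then D ^ I.card else 0)) (fun _ _ => Nat.zero_le _) hmem)
        have h2 : ∀ i ∈ I0, p.2 i = p'.2 i := by
          intro i hi
          rw [hI0, Finset.mem_filter] at hi
          exact hi.2.2
        by_cases hc : (∀ i ∈ I0, (lf i).map p.1 = (lf i).map p'.1)
        · rw [if_pos hc, if_pos ⟨hc, h2⟩]
        · rw [if_neg hc]; exact Nat.zero_le _
    _ = D ^ (b * m) * ∑ I ∈ U, ∑ p : (Fin a ↪ Fin n) × (Fin b → Fin m),
        ∑ p' : (Fin a ↪ Fin n) × (Fin b → Fin m),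
        (if (∀ i ∈ I, (lf i).map p.1 = (lf i).map p'.1) ∧
          (∀ i ∈ I, p.2 i = p'.2 i) then D ^ I.card else 0) := by
        simp_rw [← Finset.mul_sum]
        congr 1
        rw [Finset.sum_comm]
        rw [Finset.sum_comm (s := U)]
        rw [Finset.sum_comm]
        refine Finset.sum_congr rfl fun p _ => ?_
        rw [Finset.sum_comm]
    _ ≤ D ^ (b * m) * ∑ I ∈ U,
        4 ^ a * (Fintype.card ((Fin a ↪ Fin n) × (Fin b → Fin m))) ^ 2 := by
        refine Nat.mul_le_mul_left _ (Finset.sum_le_sum fun I hI => ?_)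
        refine overlap_count lf I hn hna hk hm (hlf I ?_)
        intro i hi
        rw [hU, Finset.mem_powerset] at hI
        have := hI hi
        rw [Finset.mem_filter] at this
        exact this.2
    _ ≤ D ^ (b * m) * (2 ^ b *
        (4 ^ a * (Fintype.card ((Fin a ↪ Fin n) × (Fin b → Fin m))) ^ 2)) := by
        rw [Finset.sum_const, smul_eq_mul]
        refine Nat.mul_le_mul_left _ (Nat.mul_le_mul_right _ ?_)
        rw [hU, Finset.card_powerset, card_lt_fin hj]
        exact Nat.pow_le_pow_right (by norm_num) hj
    _ = _ := by ring

lemma round_count {a b m n k : ℕ} (e0 : Sym2 (Fin a)) (LL : Finset (List (Sym2 (Fin a))))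
    (hn : 1 ≤ n) (hna : 2 * a ≤ n) (hk : 1 ≤ k) (hm : n ^ (k - 1) ≤ m ^ k)
    (hL : ∀ l ∈ LL, l.length ≤ b)
    (hlf : ∀ l ∈ LL, ∀ I : Finset (Fin b), (∀ i ∈ I, (i : ℕ) < l.length) →
      (k + 1) * I.card ≤ k * (Finset.univ.filter (fun x => ∃ i ∈ I, x ∈ l.getD i e0)).card)
    (W : Finset (Fin (b * m) → Sym2 (Fin n)))
    (hW : ∀ (φ : Fin a ↪ Fin n) (t : Fin b → Fin m) (f : Fin (b * m) → Sym2 (Fin n)),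
      ∃ l ∈ LL, plant l.length (fun i : Fin b => l.getD i e0) φ t f ∈ W) :
    Fintype.card (Sym2 (Fin n)) ^ (b * m) ≤ LL.card ^ 2 * (2 ^ b * 4 ^ a) * W.card := by
  set D := Fintype.card (Sym2 (Fin n)) with hD
  have hmpos : 1 ≤ m := by
    rcases Nat.eq_zero_or_pos m with h | h
    · subst h
      rw [zero_pow (by omega)] at hm
      have := pow_pos (show 0 < n from hn) (k - 1)
      omega
    · exact h
  let Pt := (Fin a ↪ Fin n) × (Fin b → Fin m)
  set Z := Fintype.card Pt with hZ
  have hZpos : 0 < Z := by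
    rw [hZ, Fintype.card_pos_iff]
    exact ⟨(Fin.castLEEmb (by omega : a ≤ n)), fun _ => ⟨0, hmpos⟩⟩
  have hDpos : 0 < D := by
    rw [hD, Fintype.card_pos_iff]
    exact ⟨s(⟨0, hn⟩, ⟨0, hn⟩)⟩
  let A : List (Sym2 (Fin a)) → ℕ := fun l => ∑ p : Pt, (Finset.univ.filter
    (fun f => plant l.length (fun i : Fin b => l.getD i e0) p.1 p.2 f ∈ W)).card
  have hsum : Z * D ^ (b * m) ≤ ∑ l ∈ LL, A l := by
    rw [Finset.sum_comm]
    calc Z * D ^ (b * m) = ∑ p : Pt, D ^ (b * m) := by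
          rw [Finset.sum_const, Finset.card_univ, smul_eq_mul]
      _ ≤ _ := by
          refine Finset.sum_le_sum fun p _ => ?_
          have : D ^ (b * m) = (Finset.univ : Finset (Fin (b * m) → Sym2 (Fin n))).card := by
            rw [Finset.card_univ, Fintype.card_fun, Fintype.card_fin]
          rw [this]
          refine le_trans (Finset.card_le_card ?_) (Finset.card_biUnion_le
            (s := LL) (t := fun l => Finset.univ.filter
              (fun f => plant l.length (fun i : Fin b => l.getD i e0) p.1 p.2 f ∈ W)))
          intro f _
          obtain ⟨l, hl, hl2⟩ := hW p.1 p.2 f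
          rw [Finset.mem_biUnion]
          exact ⟨l, hl, by simp only [Finset.mem_filter, Finset.mem_univ, true_and]; exact hl2⟩
  obtain ⟨l, hl, hlA⟩ : ∃ l ∈ LL, Z * D ^ (b * m) ≤ LL.card * A l := by
    by_contra hcon
    push Not at hcon
    have hne : LL.Nonempty := by
      by_contra h
      rw [Finset.not_nonempty_iff_eq_empty] at h
      rw [h, Finset.sum_empty] at hsum
      have : 0 < Z * D ^ (b * m) := Nat.mul_pos hZpos (pow_pos hDpos _)
      omega
    have h1 := Finset.sum_lt_sum_of_nonempty hne hcon
    rw [← Finset.mul_sum, Finset.sum_const, smul_eq_mul] at h1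
    have h2 := Nat.mul_le_mul_left LL.card hsum
    omega
  set j := l.length with hj
  let lf : Fin b → Sym2 (Fin a) := fun i => l.getD i e0
  let X : (Fin (b * m) → Sym2 (Fin n)) → ℕ := fun g => (Finset.univ.filter
      (fun p : Pt => Cons j lf p g)).card
  have hA : A l ≤ (∑ g ∈ W, X g) * D ^ j := by
    calc A l ≤ ∑ p : Pt, (W.filter (fun g => Cons j lf p g)).card * D ^ j :=
          Finset.sum_le_sum fun p _ => plant_count j (hL l hl) lf p W
      _ = _ := by
          rw [← Finset.sum_mul]
          congr 1
          simp only [X, Finset.card_filter]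
          rw [Finset.sum_comm]
  have hcs : (∑ g ∈ W, X g) ^ 2 ≤ W.card * ∑ g ∈ W, X g ^ 2 := sq_sum_le_card_mul_sum_sq
  have hsub : ∑ g ∈ W, X g ^ 2 ≤ ∑ g, X g ^ 2 :=
    Finset.sum_le_sum_of_subset (Finset.subset_univ W)
  have hsm := second_moment j (hL l hl) lf hn hna hk hm (hlf l hl)
  have hfin : (Z * D ^ (b * m)) ^ 2 ≤
      (LL.card ^ 2 * (2 ^ b * 4 ^ a) * W.card) * (Z ^ 2 * D ^ (b * m)) := by
    calc (Z * D ^ (b * m)) ^ 2 ≤ (LL.card * ((∑ g ∈ W, X g) * D ^ j)) ^ 2 :=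
          Nat.pow_le_pow_left (hlA.trans (Nat.mul_le_mul_left _ hA)) 2
      _ = LL.card ^ 2 * (∑ g ∈ W, X g) ^ 2 * D ^ (2 * j) := by
          rw [mul_pow, mul_pow, ← pow_mul, mul_comm j 2, mul_assoc]
      _ ≤ LL.card ^ 2 * (W.card * ∑ g, X g ^ 2) * D ^ (2 * j) :=
          Nat.mul_le_mul_right _ (Nat.mul_le_mul_left _
            (hcs.trans (Nat.mul_le_mul_left _ hsub)))
      _ = LL.card ^ 2 * W.card * ((∑ g, X g ^ 2) * D ^ (2 * j)) := by ring
      _ ≤ LL.card ^ 2 * W.card * (2 ^ b * 4 ^ a * Z ^ 2 * D ^ (b * m)) :=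
          Nat.mul_le_mul_left _ hsm
      _ = _ := by ring
  have hpos : 0 < Z ^ 2 * D ^ (b * m) := Nat.mul_pos (pow_pos hZpos _) (pow_pos hDpos _)
  refine Nat.le_of_mul_le_mul_right ?_ hpos
  calc _ = (Z * D ^ (b * m)) ^ 2 := by ring
    _ ≤ _ := hfin

lemma list_forest {a b k : ℕ} (e0 : Sym2 (Fin a)) (l : List (Sym2 (Fin a)))
    (hl : ValidEdgeSeq l) (ht : ∀ i : ℕ, TreeSizeLE (boardOf (l.take i)) k)
    (I : Finset (Fin b)) (hI : ∀ i ∈ I, (i : ℕ) < l.length) :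
    (k + 1) * I.card ≤ k * (Finset.univ.filter (fun x => ∃ i ∈ I, x ∈ l.getD i e0)).card := by
  have hG := ht l.length
  rw [List.take_length] at hG
  let S : Finset (Sym2 (Fin a)) := I.image (fun i : Fin b => l.getD i e0)
  have hmem : ∀ e ∈ S, e ∈ l := by
    intro e he
    obtain ⟨i, hi, rfl⟩ := Finset.mem_image.1 he
    rw [List.getD_eq_getElem l e0 (hI i hi)]
    exact List.getElem_mem _
  let H : SimpleGraph (Fin a) := SimpleGraph.fromEdgeSet (S : Set (Sym2 (Fin a)))
  have hle : H ≤ boardOf l := by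
    apply SimpleGraph.fromEdgeSet_mono
    intro e he
    exact hmem e he
  have hcard : S.card = I.card := by
    apply Finset.card_image_of_injOn
    intro i hi i' hi' h
    simp only at h
    rw [List.getD_eq_getElem l e0 (hI i hi), List.getD_eq_getElem l e0 (hI i' hi')] at h
    exact Fin.ext ((List.Nodup.getElem_inj_iff hl.1).1 h)
  rw [← hcard]
  refine forest_count' (boardOf l) H k hG hle S _ ?_ ?_
  · intro e he
    rw [SimpleGraph.edgeSet_fromEdgeSet]
    exact ⟨he, hl.2 e (hmem e he)⟩
  · intro x hx
    simp only [Finset.mem_filter, Finset.mem_univ, true_and]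
    obtain ⟨y, hy⟩ := (SimpleGraph.mem_support H).1 hx
    have hy2 := ((SimpleGraph.fromEdgeSet_adj _).1 hy).1
    obtain ⟨i, hi, h⟩ := Finset.mem_image.1 (Finset.mem_coe.1 hy2)
    refine ⟨i, hi, ?_⟩
    rw [h]; simp

/-- number of failing sequences -/
noncomputable def failCount {α : Type} (F : SimpleGraph α) {r n : ℕ} (π : PainterStrategy (Fin n) r)
    (h0 : EdgeHistory (Fin n) r) (L : ℕ) : ℕ :=
  (Finset.univ.filter (fun f : Fin L → Sym2 (Fin n) =>
    ¬ HasMonoCopy F (runPainterAux π h0 (List.ofFn f)))).card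

lemma round_fail {α : Type} (F : SimpleGraph α) (hF : F.edgeSet.Nonempty) (r k : ℕ) (hr : 2 ≤ r)
    (hk : BuilderWinsTree F r k) :
    1 ≤ k ∧ ∃ (a b : ℕ) (q : ℝ), 0 ≤ q ∧ q < 1 ∧ ∀ (n m : ℕ), 1 ≤ n → 2 * a ≤ n →
      n ^ (k - 1) ≤ m ^ k → ∀ (π : PainterStrategy (Fin n) r) (h0 : EdgeHistory (Fin n) r),
      (failCount F π h0 (b * m) : ℝ) ≤ q * (Fintype.card (Sym2 (Fin n)) : ℝ) ^ (b * m) := by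
  obtain ⟨a, ha⟩ := hk
  have hedge : ∀ h : EdgeHistory (Fin a) r, HasMonoCopy F h → ∃ p ∈ h, True := by
    rintro h ⟨c, f, hf⟩
    obtain ⟨e, he⟩ := hF
    induction e using Sym2.ind with
    | _ x y =>
      have := ((SimpleGraph.fromEdgeSet_adj _).1 (hf x y he)).1
      exact ⟨_, this, trivial⟩
  obtain ⟨l0, hl01, hl02, hl03⟩ := ha (fun _ _ => ⟨0, by omega⟩)
  obtain ⟨e0, he0⟩ : ∃ e0, e0 ∈ l0 := by
    obtain ⟨p, hp, -⟩ := hedge _ hl03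
    have := List.mem_map_of_mem (f := Prod.fst) hp
    unfold runPainter at this
    rw [runAux_map_fst] at this
    exact ⟨p.1, by simpa using this⟩
  let b := Fintype.card (Sym2 (Fin a))
  have hb : ∀ l : List (Sym2 (Fin a)), ValidEdgeSeq l → l.length ≤ b :=
    fun l hl => hl.1.length_le_card
  have hfin : {l : List (Sym2 (Fin a)) | ValidEdgeSeq l ∧
      ∀ i : ℕ, TreeSizeLE (boardOf (l.take i)) k}.Finite :=
    (List.finite_length_le (Sym2 (Fin a)) b).subset fun l hl => hb l hl.1
  let LL := hfin.toFinset
  have hLL : ∀ l, l ∈ LL ↔ ValidEdgeSeq l ∧ ∀ i : ℕ, TreeSizeLE (boardOf (l.take i)) k := by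
    intro l; simp [LL]
  refine ⟨?_, a, b, 1 - 1 / ((LL.card ^ 2 * (2 ^ b * 4 ^ a) : ℕ) : ℝ), ?_, ?_, ?_⟩
  · by_contra hk0
    have hk0 : k = 0 := by omega
    subst hk0
    have hlen : 0 < l0.length := List.length_pos_of_mem he0
    have := list_forest (b := 1) e0 l0 hl01 hl02 {0} (by simpa using hlen)
    simp at this
  · have : (1 : ℝ) ≤ ((LL.card ^ 2 * (2 ^ b * 4 ^ a) : ℕ) : ℝ) := by
      have h1 : 0 < LL.card := Finset.card_pos.2 ⟨l0, (hLL l0).2 ⟨hl01, hl02⟩⟩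
      have : 1 ≤ LL.card ^ 2 * (2 ^ b * 4 ^ a) := Nat.succ_le_of_lt (by positivity)
      exact_mod_cast this
    have := div_le_one_of_le₀ this (by positivity)
    linarith
  · have : (0 : ℝ) < ((LL.card ^ 2 * (2 ^ b * 4 ^ a) : ℕ) : ℝ) := by
      have h1 : 0 < LL.card := Finset.card_pos.2 ⟨l0, (hLL l0).2 ⟨hl01, hl02⟩⟩
      have : 0 < LL.card ^ 2 * (2 ^ b * 4 ^ a) := by positivity
      exact_mod_cast this
    have : 0 < 1 / ((LL.card ^ 2 * (2 ^ b * 4 ^ a) : ℕ) : ℝ) := by positivity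
    linarith
  · intro n m hn hna hm π h0
    have hk1 : 1 ≤ k := by
      by_contra hk0
      have hk0 : k = 0 := by omega
      subst hk0
      have hlen : 0 < l0.length := List.length_pos_of_mem he0
      have := list_forest (b := 1) e0 l0 hl01 hl02 {0} (by simpa using hlen)
      simp at this
    let W : Finset (Fin (b * m) → Sym2 (Fin n)) := Finset.univ.filter
      (fun f => HasMonoCopy F (runPainterAux π h0 (List.ofFn f)))
    have h1 := round_count (b := b) (m := m) e0 LL hn hna hk1 hm
      (fun l hl => hb l ((hLL l).1 hl).1)
      (fun l hl I hI => list_forest e0 l ((hLL l).1 hl).1 ((hLL l).1 hl).2 I hI) W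
      (fun φ t f => by
        obtain ⟨l, hl1, hl2, hl3⟩ := exists_win F r k a b m n ha hb e0 π h0 φ t f
        exact ⟨l, (hLL l).2 ⟨hl1, hl2⟩, by simp only [W, Finset.mem_filter, Finset.mem_univ, true_and]; exact hl3⟩)
    have h2 := Finset.card_filter_add_card_filter_not
      (s := (Finset.univ : Finset (Fin (b * m) → Sym2 (Fin n))))
      (fun f => HasMonoCopy F (runPainterAux π h0 (List.ofFn f)))
    rw [Finset.card_univ, Fintype.card_fun, Fintype.card_fin] at h2
    have h3 : W.card + failCount F π h0 (b * m) = Fintype.card (Sym2 (Fin n)) ^ (b * m) := h2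
    set Cst := LL.card ^ 2 * (2 ^ b * 4 ^ a) with hC
    have hCpos : (0 : ℝ) < (Cst : ℝ) := by
      have h1 : 0 < LL.card := Finset.card_pos.2 ⟨l0, (hLL l0).2 ⟨hl01, hl02⟩⟩
      have : 0 < LL.card ^ 2 * (2 ^ b * 4 ^ a) := by positivity
      exact_mod_cast this
    have h1' : (Fintype.card (Sym2 (Fin n)) : ℝ) ^ (b * m) ≤ Cst * W.card := by exact_mod_cast h1
    have h3' : (W.card : ℝ) + failCount F π h0 (b * m)
      = (Fintype.card (Sym2 (Fin n)) : ℝ) ^ (b * m) := by exact_mod_cast h3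
    have h4 : (Fintype.card (Sym2 (Fin n)) : ℝ) ^ (b * m) / Cst ≤ W.card := by
      rw [div_le_iff₀ hCpos]; linarith
    have h5 : (1 - 1 / (Cst : ℝ)) * (Fintype.card (Sym2 (Fin n)) : ℝ) ^ (b * m)
      = (Fintype.card (Sym2 (Fin n)) : ℝ) ^ (b * m)
        - (Fintype.card (Sym2 (Fin n)) : ℝ) ^ (b * m) / Cst := by ring
    rw [h5]; linarith

lemma multi_fail {α : Type} (F : SimpleGraph α) {r n : ℕ} (π : PainterStrategy (Fin n) r) (R : ℕ)
    (q : ℝ) (hq : 0 ≤ q)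
    (h : ∀ h0, (failCount F π h0 R : ℝ) ≤ q * (Fintype.card (Sym2 (Fin n)) : ℝ) ^ R) (M : ℕ)
    (h0 : EdgeHistory (Fin n) r) :
    (failCount F π h0 (R * M) : ℝ) ≤ q ^ M * (Fintype.card (Sym2 (Fin n)) : ℝ) ^ (R * M) := by
  induction M generalizing h0 with
  | zero =>
    simp only [Nat.mul_zero, pow_zero, mul_one]
    have : failCount F π h0 0 ≤ 1 := (Finset.card_le_univ _).trans (by simp)
    exact_mod_cast this
  | succ M ih =>
    have hs : R * (M + 1) = R + R * M := by ring
    rw [hs]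
    let B : Finset (Fin R → Sym2 (Fin n)) := Finset.univ.filter
      (fun f : Fin R → Sym2 (Fin n) => ¬ HasMonoCopy F (runPainterAux π h0 (List.ofFn f)))
    have h1 : failCount F π h0 (R + R * M) ≤ ∑ f1 ∈ B,
        failCount F π (runPainterAux π h0 (List.ofFn f1)) (R * M) := by
      unfold failCount
      rw [← Finset.card_sigma]
      refine Finset.card_le_card_of_injOn (fun f => ⟨((Fin.appendEquiv R (R * M)).symm f).1,
        ((Fin.appendEquiv R (R * M)).symm f).2⟩) ?_ ?_
      · intro f hf
        obtain ⟨⟨f1, f2⟩, rfl⟩ := (Fin.appendEquiv R (R * M)).surjective f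
        have hf := (Finset.mem_filter.1 (Finset.mem_coe.1 hf)).2
        have hap : List.ofFn ((Fin.appendEquiv R (R * M)) (f1, f2))
          = List.ofFn f1 ++ List.ofFn f2 := List.ofFn_fin_append f1 f2
        rw [hap, runAux_append] at hf
        beta_reduce
        rw [Equiv.symm_apply_apply]
        rw [Finset.mem_coe, Finset.mem_sigma]
        exact ⟨Finset.mem_filter.2 ⟨Finset.mem_univ _, fun hc => hf (hc.mono (runAux_subset _ _ _))⟩, Finset.mem_filter.2 ⟨Finset.mem_univ _, hf⟩⟩
      · intro f _ f' _ hff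
        have hff1 := congrArg Sigma.fst hff
        have hff2 := congrArg (fun z => (⟨z.1, z.2⟩ : (Fin R → Sym2 (Fin n)) × (Fin (R * M) → Sym2 (Fin n)))) hff
        exact (Fin.appendEquiv R (R * M)).symm.injective hff2
    set D := (Fintype.card (Sym2 (Fin n)) : ℝ) with hD
    have hDnn : 0 ≤ D := by positivity
    calc (failCount F π h0 (R + R * M) : ℝ) ≤ ∑ f1 ∈ B,
        (failCount F π (runPainterAux π h0 (List.ofFn f1)) (R * M) : ℝ) := by exact_mod_cast h1
      _ ≤ ∑ f1 ∈ B,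
        (q ^ M * D ^ (R * M)) := Finset.sum_le_sum fun f1 _ => ih _
      _ = (failCount F π h0 R : ℝ) * (q ^ M * D ^ (R * M)) := by
          rw [Finset.sum_const, nsmul_eq_mul]; rfl
      _ ≤ (q * D ^ R) * (q ^ M * D ^ (R * M)) :=
          mul_le_mul_of_nonneg_right (h h0) (by positivity)
      _ = _ := by rw [pow_succ, pow_add]; ring

/-- number of valid sequences -/
noncomputable def validCount (n N : ℕ) : ℕ :=
  (Finset.univ.filter (fun f : Fin N → Sym2 (Fin n) => ValidSeqFun f)).card

/-- number of valid failing sequences -/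
noncomputable def vfailCount {α : Type} (F : SimpleGraph α) {r n : ℕ} (π : PainterStrategy (Fin n) r)
    (N : ℕ) : ℕ :=
  (Finset.univ.filter (fun f : Fin N → Sym2 (Fin n) =>
    ValidSeqFun f ∧ ¬ OnlineMonoCopy F π f)).card

lemma ncard_setOf_filter {β : Type} [Fintype β] (P : β → Prop) :
    Set.ncard {x | P x} = (Finset.univ.filter P).card := by
  rw [← Set.ncard_coe_finset]; congr 1; ext x; simp

lemma onlineProb_eq {α : Type} (F : SimpleGraph α) {r n : ℕ} (π : PainterStrategy (Fin n) r)
    (N : ℕ) (hV : 0 < validCount n N) :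
    onlineProb n N (OnlineMonoCopy F π) = 1 - (vfailCount F π N : ℝ) / validCount n N := by
  unfold onlineProb
  rw [ncard_setOf_filter, ncard_setOf_filter]
  have h := Finset.card_filter_add_card_filter_not
    (s := Finset.univ.filter (fun f : Fin N → Sym2 (Fin n) => ValidSeqFun f))
    (fun f => OnlineMonoCopy F π f)
  rw [Finset.filter_filter, Finset.filter_filter] at h
  have h2 : ((Finset.univ.filter (fun f : Fin N → Sym2 (Fin n) =>
    ValidSeqFun f ∧ OnlineMonoCopy F π f)).card : ℝ) + vfailCount F π N = validCount n N := by
    exact_mod_cast h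
  have h3 : (0 : ℝ) < validCount n N := by exact_mod_cast hV
  change _ / (validCount n N : ℝ) = _
  rw [eq_sub_iff_add_eq, ← add_div, div_eq_one_iff_eq h3.ne']
  convert h2

lemma validCount_eq (n N : ℕ) : validCount n N = (n.choose 2).descFactorial N := by
  have h1 : Fintype.card {e : Sym2 (Fin n) // ¬ e.IsDiag} = n.choose 2 := by
    rw [Sym2.card_subtype_not_diag, Fintype.card_fin]
  rw [← h1]
  have h2 := Fintype.card_embedding_eq (α := Fin N) (β := {e : Sym2 (Fin n) // ¬ e.IsDiag})
  rw [Fintype.card_fin] at h2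
  rw [← h2, validCount, ← Fintype.card_subtype]
  refine Fintype.card_congr ⟨fun f => ⟨fun i => ⟨f.1 i, f.2.2 i⟩, fun i i' h => f.2.1
    (congrArg Subtype.val h)⟩, fun g => ⟨fun i => (g i).1, fun i i' h => g.injective
    (Subtype.ext h), fun i => (g i).2⟩, fun f => rfl, fun g => rfl⟩

lemma vfail_succ {α : Type} (F : SimpleGraph α) {r n : ℕ} (π : PainterStrategy (Fin n) r) (N : ℕ) :
    vfailCount F π (N + 1) ≤ vfailCount F π N * (n.choose 2 - N) := by
  have hnd : (Finset.univ.filter (fun e : Sym2 (Fin n) => ¬ e.IsDiag)).card = n.choose 2 := by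
    rw [← Fintype.card_subtype, Sym2.card_subtype_not_diag, Fintype.card_fin]
  let B : Finset (Fin N → Sym2 (Fin n)) := Finset.univ.filter (fun f : Fin N → Sym2 (Fin n) =>
    ValidSeqFun f ∧ ¬ OnlineMonoCopy F π f)
  let T : (Fin N → Sym2 (Fin n)) → Finset (Sym2 (Fin n)) := fun f =>
    (Finset.univ.filter (fun e : Sym2 (Fin n) => ¬ e.IsDiag)) \ Finset.univ.image f
  have hT : ∀ f ∈ B, (T f).card = n.choose 2 - N := by
    intro f hf
    simp only [B, Finset.mem_filter, Finset.mem_univ, true_and] at hf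
    rw [Finset.card_sdiff_of_subset, hnd, Finset.card_image_of_injective _ hf.1.1, Finset.card_univ,
      Fintype.card_fin]
    intro e he
    obtain ⟨i, -, rfl⟩ := Finset.mem_image.1 he
    simp only [Finset.mem_filter, Finset.mem_univ, true_and]
    exact hf.1.2 i
  have h1 : vfailCount F π N * (n.choose 2 - N) = (B.sigma T).card := by
    rw [Finset.card_sigma, Finset.sum_congr rfl hT, Finset.sum_const, smul_eq_mul]; rfl
  rw [h1]
  refine Finset.card_le_card_of_injOn (fun f => ⟨fun i => f i.castSucc, f (Fin.last N)⟩) ?_ ?_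
  · intro f hf
    simp only [Finset.coe_filter, Finset.mem_univ, true_and, Set.mem_ofPred_eq] at hf
    simp only [B, T, Finset.mem_coe, Finset.mem_sigma, Finset.mem_filter, Finset.mem_univ, true_and,
      Finset.mem_sdiff, Finset.mem_image, not_exists]
    refine ⟨⟨⟨fun i i' h => Fin.castSucc_injective _ (hf.1.1 h), fun i => hf.1.2 _⟩, ?_⟩,
      hf.1.2 _, fun i hi => ?_⟩
    · intro hc
      apply hf.2
      unfold OnlineMonoCopy runPainter at hc ⊢
      rw [List.ofFn_succ', List.concat_eq_append, runAux_append]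
      exact hc.mono (runAux_subset _ _ _)
    · have := hf.1.1 hi
      exact (Fin.castSucc_lt_last i).ne this
  · intro f _ f' _ h
    simp only [Sigma.mk.injEq, heq_eq_eq] at h
    funext i
    induction i using Fin.lastCases with
    | last => exact h.2
    | cast i => exact congrFun h.1 i

lemma validCount_pos {n N : ℕ} (h : N ≤ n.choose 2) : 0 < validCount n N := by
  rw [validCount_eq]; exact Nat.descFactorial_pos.2 h

lemma vfail_ratio {α : Type} (F : SimpleGraph α) {r n : ℕ} (π : PainterStrategy (Fin n) r)
    (L N : ℕ) (hLN : L ≤ N) (hN : N ≤ n.choose 2) :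
    (vfailCount F π N : ℝ) / validCount n N ≤ (vfailCount F π L : ℝ) / validCount n L := by
  induction N, hLN using Nat.le_induction with
  | base => exact le_rfl
  | succ N hLN ih =>
    refine le_trans ?_ (ih (by omega))
    have h1 := vfail_succ F π N
    have h2 : validCount n (N + 1) = validCount n N * (n.choose 2 - N) := by
      rw [validCount_eq, validCount_eq, Nat.descFactorial_succ, mul_comm]
    have h3 : 0 < validCount n N := validCount_pos (by omega)
    have h4 : 0 < n.choose 2 - N := by omega
    rw [div_le_div_iff₀ (by exact_mod_cast validCount_pos hN) (by exact_mod_cast h3), h2]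
    have : vfailCount F π (N + 1) * validCount n N
        ≤ vfailCount F π N * (validCount n N * (n.choose 2 - N)) := by
      calc _ ≤ _ := Nat.mul_le_mul_right _ h1
        _ = _ := by ring
    exact_mod_cast this

lemma valid_lower (n L : ℕ) (hn : 1 ≤ n) (hL : 8 * L ≤ n) (hL2 : L ≤ n.choose 2) :
    (Fintype.card (Sym2 (Fin n)) : ℝ) ^ L ≤ 2 * validCount n L := by
  have hDeq : Fintype.card (Sym2 (Fin n)) = n.choose 2 + n := by
    rw [Sym2.card, Fintype.card_fin, Nat.choose_succ_succ' n 1]; simp [add_comm]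
  set D := Fintype.card (Sym2 (Fin n)) with hD
  have hD2 : n ^ 2 ≤ 2 * D := by
    have : 2 * n.choose 2 = n * (n - 1) := by
      rw [Nat.choose_two_right]
      exact Nat.mul_div_cancel' (Nat.even_mul_pred_self n).two_dvd
    obtain ⟨p, rfl⟩ : ∃ p, n = p + 1 := ⟨n - 1, by omega⟩
    simp only [Nat.add_sub_cancel] at this
    nlinarith
  have h1 : (n.choose 2 + 1 - L) ^ L ≤ validCount n L := by
    rw [validCount_eq]; exact Nat.pow_sub_le_descFactorial _ _
  have hDpos : (0 : ℝ) < D := by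
    have : 0 < D := by nlinarith [pow_pos (show 0 < n from hn) 2]
    exact_mod_cast this
  have h1' : ((n.choose 2 + 1 - L : ℕ) : ℝ) ^ L ≤ validCount n L := by exact_mod_cast h1
  have hcast : ((n.choose 2 + 1 - L : ℕ) : ℝ) = (n.choose 2 : ℝ) + 1 - L := by
    rw [Nat.cast_sub (by omega)]; push_cast; ring
  have hDeq' : (D : ℝ) = n.choose 2 + n := by exact_mod_cast hDeq
  have hD2' : (n : ℝ) ^ 2 ≤ 2 * D := by exact_mod_cast hD2
  have hL' : 8 * (L : ℝ) ≤ n := by exact_mod_cast hL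
  have hn' : (1 : ℝ) ≤ n := by exact_mod_cast hn
  have hL0 : (0 : ℝ) ≤ L := by positivity
  have hsmall : (L : ℝ) * ((n + L) / D) ≤ 1 / 2 := by
    rw [← mul_div_assoc, div_le_iff₀ hDpos]
    nlinarith
  have hx : (n + L : ℝ) / D ≤ 1 := by
    rw [div_le_one hDpos, hDeq']
    have : (L : ℝ) ≤ n.choose 2 := by exact_mod_cast hL2
    linarith
  have hb := one_add_mul_le_pow (a := -((n + L : ℝ) / D)) (by linarith) L
  have h3 : (1 : ℝ) / 2 ≤ (1 + -((n + L : ℝ) / D)) ^ L := by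
    refine le_trans ?_ hb
    linarith
  have h4 : ((D : ℝ) * (1 + -((n + L : ℝ) / D))) ^ L ≤ validCount n L := by
    refine le_trans (pow_le_pow_left₀ ?_ ?_ L) h1'
    · apply mul_nonneg hDpos.le; linarith
    · rw [hcast, mul_add, mul_neg, mul_div_cancel₀ _ hDpos.ne', hDeq']
      linarith
  rw [mul_pow] at h4
  have h5 : (D : ℝ) ^ L * (1 / 2) ≤ (D : ℝ) ^ L * (1 + -((n + L : ℝ) / D)) ^ L :=
    mul_le_mul_of_nonneg_left h3 (by positivity)
  linarith

lemma vfail_le {α : Type} (F : SimpleGraph α) {r n : ℕ} (π : PainterStrategy (Fin n) r) (L : ℕ) :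
    vfailCount F π L ≤ failCount F π [] L := by
  apply Finset.card_le_card
  intro f hf
  simp only [Finset.mem_filter, Finset.mem_univ, true_and] at hf ⊢
  exact hf.2
/-- upper bound part of Theorem 6. Let `F` be a forest with at least one
edge, `r ≥ 2`, and let `k` be the smallest integer for which Builder wins the deterministic
`F`-avoidance game with `r` colors and tree size restriction `k`. Then for `N(n)` with
`n^(1-1/k) = o(N(n))` and `N(n) ≤ n(n-1)/2`, a.a.s. the board after `N(n)` steps contains a
monochromatic copy of `F`, for every sequence of online Painter strategies. -/
theorem statement1 {α : Type} [Fintype α] (F : SimpleGraph α) (hforest : F.IsAcyclic)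
    (hF : F.edgeSet.Nonempty) (r : ℕ) (hr : 2 ≤ r)
    (k : ℕ) (hk : BuilderWinsTree F r k) (hkmin : ∀ j : ℕ, j < k → ¬ BuilderWinsTree F r j)
    (N : ℕ → ℕ)
    (hN : (fun n : ℕ => (n : ℝ) ^ ((1 : ℝ) - 1 / (k : ℝ))) =o[atTop] (fun n : ℕ => (N n : ℝ)))
    (hNle : ∀ n : ℕ, N n ≤ n * (n - 1) / 2)
    (π : (n : ℕ) → PainterStrategy (Fin n) r) :
    Tendsto (fun n : ℕ => onlineProb n (N n) (OnlineMonoCopy F (π n)))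
      atTop (nhds 1) := by
  obtain ⟨hk1, a, b, q, hq0, hq1, hround⟩ := round_fail F hF r k hr hk
  have hkpos : (0 : ℝ) < k := by exact_mod_cast hk1
  rw [Metric.tendsto_atTop']
  intro ε hε
  obtain ⟨M, hM⟩ := exists_pow_lt_of_lt_one (show 0 < ε / 2 by positivity) hq1
  let m : ℕ → ℕ := fun n => ⌈(n : ℝ) ^ ((1 : ℝ) - 1 / (k : ℝ))⌉₊
  set Cc : ℝ := 2 * (b * M + 1) with hCc
  have hCpos : 0 < Cc := by positivity
  have e1 : ∀ᶠ n : ℕ in atTop, Cc * (n : ℝ) ^ ((1 : ℝ) - 1 / (k : ℝ)) ≤ N n := by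
    have := hN.bound (show (0 : ℝ) < 1 / Cc by positivity)
    filter_upwards [this] with n hn
    rw [Real.norm_of_nonneg (by positivity), Real.norm_of_nonneg (by positivity)] at hn
    rw [div_mul_eq_mul_div, one_mul, le_div_iff₀ hCpos] at hn
    linarith
  have e2 : ∀ᶠ n : ℕ in atTop, 8 * (Cc * (n : ℝ) ^ ((1 : ℝ) - 1 / (k : ℝ))) ≤ n := by
    have h1 := (tendsto_rpow_neg_atTop (show 0 < 1 / (k : ℝ) by positivity)).comp
      (tendsto_natCast_atTop_atTop (R := ℝ))
    have h2 := h1.eventually (gt_mem_nhds (show (0 : ℝ) < 1 / (8 * Cc) by positivity))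
    filter_upwards [h2, eventually_ge_atTop 1] with n hn hn1
    have hn1' : (0 : ℝ) < n := by exact_mod_cast hn1
    simp only [Function.comp] at hn
    rw [lt_div_iff₀ (by positivity)] at hn
    rw [sub_eq_add_neg, Real.rpow_add hn1', Real.rpow_one]
    nlinarith
  have e3 := eventually_ge_atTop (max 1 (2 * a))
  have hall := (e1.and e2).and e3
  rw [eventually_atTop] at hall
  obtain ⟨n0, hn0⟩ := hall
  refine ⟨n0, fun n hn => ?_⟩
  obtain ⟨⟨h1, h2⟩, h3⟩ := hn0 n hn.le
  have hn1 : 1 ≤ n := le_trans (le_max_left _ _) h3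
  have hna : 2 * a ≤ n := le_trans (le_max_right _ _) h3
  have hn1' : (1 : ℝ) ≤ n := by exact_mod_cast hn1
  have hexp : (0 : ℝ) ≤ 1 - 1 / (k : ℝ) := by
    have : 1 / (k : ℝ) ≤ 1 := div_le_one_of_le₀ (by exact_mod_cast hk1) hkpos.le
    linarith
  have hx1 : (1 : ℝ) ≤ (n : ℝ) ^ ((1 : ℝ) - 1 / (k : ℝ)) := Real.one_le_rpow hn1' hexp
  have hm1 : (n : ℝ) ^ ((1 : ℝ) - 1 / (k : ℝ)) ≤ m n := Nat.le_ceil _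
  have hm2 : (m n : ℝ) ≤ 2 * (n : ℝ) ^ ((1 : ℝ) - 1 / (k : ℝ)) := by
    have := Nat.ceil_lt_add_one (show 0 ≤ (n : ℝ) ^ ((1 : ℝ) - 1 / (k : ℝ)) by positivity)
    simp only [m]
    linarith
  have hmk : n ^ (k - 1) ≤ (m n) ^ k := by
    have h4 : ((n : ℝ) ^ ((1 : ℝ) - 1 / (k : ℝ))) ^ k ≤ (m n : ℝ) ^ k :=
      pow_le_pow_left₀ (by positivity) hm1 k
    rw [← Real.rpow_natCast, ← Real.rpow_mul (by positivity)] at h4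
    have h5 : ((1 : ℝ) - 1 / (k : ℝ)) * k = ((k - 1 : ℕ) : ℝ) := by
      rw [Nat.cast_sub hk1]; field_simp; simp
    rw [h5, Real.rpow_natCast] at h4
    exact_mod_cast h4
  set L := b * m n * M with hLdef
  have hLC : (L : ℝ) ≤ Cc * (n : ℝ) ^ ((1 : ℝ) - 1 / (k : ℝ)) := by
    have h4 : (L : ℝ) = (b * M : ℝ) * m n := by rw [hLdef]; push_cast; ring
    rw [h4, hCc]
    have h5 : (b * M : ℝ) * m n ≤ (b * M : ℝ) * (2 * (n : ℝ) ^ ((1 : ℝ) - 1 / (k : ℝ))) :=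
      mul_le_mul_of_nonneg_left hm2 (by positivity)
    nlinarith
  have hLN : L ≤ N n := by
    have : (L : ℝ) ≤ N n := hLC.trans h1
    exact_mod_cast this
  have hL8 : 8 * L ≤ n := by
    have : 8 * (L : ℝ) ≤ n := by linarith
    exact_mod_cast this
  have hNc : N n ≤ n.choose 2 := by rw [Nat.choose_two_right]; exact hNle n
  have hmf := multi_fail F (π n) (b * m n) q hq0
    (fun h0 => hround n (m n) hn1 hna hmk (π n) h0) M []
  have hvl := valid_lower n L hn1 hL8 (hLN.trans hNc)
  have hVpos : (0 : ℝ) < validCount n L := by exact_mod_cast validCount_pos (hLN.trans hNc)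
  have hr1 : (vfailCount F (π n) L : ℝ) / validCount n L ≤ 2 * q ^ M := by
    rw [div_le_iff₀ hVpos]
    have h6 : (vfailCount F (π n) L : ℝ) ≤ failCount F (π n) [] L := by
      exact_mod_cast vfail_le F (π n) L
    have h7 : q ^ M * (Fintype.card (Sym2 (Fin n)) : ℝ) ^ L ≤ q ^ M * (2 * validCount n L) :=
      mul_le_mul_of_nonneg_left hvl (by positivity)
    linarith
  have hr2 := vfail_ratio F (π n) L (N n) hLN hNc
  rw [onlineProb_eq F (π n) (N n) (validCount_pos hNc), Real.dist_eq]
  have hr3 : 0 ≤ (vfailCount F (π n) (N n) : ℝ) / validCount n (N n) := by positivity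
  rw [abs_lt]
  constructor <;> linarith
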